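/- Let q be a prime power, k ≥ 1, and n = 2k+1. Let B = B_0 ∪ B_{n-1} be a blocking set with respect to k-spaces in PG(2k+1,q) consisting of points and hyperplanes. Then |B| ≥ (q+1)·q^k, with equality if and only if there exist a (k+1)-space Σ, a (k-1)-space σ ⊂ Σ, and nonempty sets K_1, K_2 partitioning the set of all k-spaces κ with σ ⊂ κ ⊂ Σ, such that B_0 is exactly the set of points lying in some κ ∈ K_1 but not in σ, and B_{n-1} is exactly the set of hyperplanes containing some κ ∈ K_2 but not containing Σ. -/

import Mathlib

/-!
Write `Q = q ^ k`. If the point `x` cannot be dropped from the blocking set, some `k`-space `G` is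
blocked by `x` alone. Each of the `Q` hyperplanes of `G` missing `x` misses `B₀`, and hyperplanes
of `Bₙ` through two different ones are different, so if `m` is the least number of hyperplanes of
`Bₙ` through a `(k - 1)`-space missing `B₀`, then `|Bₙ| ≥ m * Q`. If `U` attains this minimum and
`H` is a hyperplane of `Bₙ` through `U`, then `q * Q` of the `k`-spaces through `U` are not
contained in `H`, and each of the other `m - 1` hyperplanes covers at most `Q` of them, so that
`|B₀| ≥ (q + 1 - m) * Q`.

If equality holds, every minimizing `U` together with any `x ∈ B₀` spans a `k`-space tangent at
`x`, whose hyperplanes off `x` are again minimizing. Moving `U` in this way shows that the span of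
`B₀` and the intersection of `Bₙ` misses `U`, hence lies in some `(k + 1)`-space `S`. The dual
statement provides a `(k - 1)`-space `σ` inside every hyperplane of `Bₙ`, so that `σ ≤ S`, and
counting inside the pencil of `k`-spaces between `σ` and `S` does the rest.
-/

open Module Submodule

section Fibers

variable {α β : Type*} {S : Set α} {T : Set β} {f : α → β} {c : ℕ}

theorem ncard_eq_sum_ncard_fiber (hS : S.Finite) (hT : T.Finite) (hf : S.MapsTo f T) :
    S.ncard = ∑ b ∈ hT.toFinset, {a ∈ S | f a = b}.ncard := by
  classical
  rw [Set.ncard_eq_toFinset_card S hS,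
    Finset.card_eq_sum_card_fiberwise (f := f) (t := hT.toFinset) (by simpa using hf)]
  refine Finset.sum_congr rfl fun b _ ↦ ?_
  rw [← Set.ncard_coe_finset]
  simp

theorem ncard_eq_ncard_mul_of_fiber (hS : S.Finite) (hT : T.Finite) (hf : S.MapsTo f T)
    (hc : ∀ b ∈ T, {a ∈ S | f a = b}.ncard = c) : S.ncard = T.ncard * c := by
  rw [ncard_eq_sum_ncard_fiber hS hT hf, Set.ncard_eq_toFinset_card T hT]
  exact Finset.sum_const_nat (by simpa using hc)

theorem ncard_mul_le_ncard_of_fiber (hS : S.Finite) (hT : T.Finite) (hf : S.MapsTo f T)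
    (hc : ∀ b ∈ T, c ≤ {a ∈ S | f a = b}.ncard) : T.ncard * c ≤ S.ncard := by
  rw [ncard_eq_sum_ncard_fiber hS hT hf, Set.ncard_eq_toFinset_card T hT]
  exact Finset.card_nsmul_le_sum _ _ c (by simpa using hc)

theorem ncard_fiber_eq_of_ncard_le (hS : S.Finite) (hT : T.Finite) (hf : S.MapsTo f T)
    (hc : ∀ b ∈ T, c ≤ {a ∈ S | f a = b}.ncard) (hle : S.ncard ≤ T.ncard * c) :
    ∀ b ∈ T, {a ∈ S | f a = b}.ncard = c := by
  have hsum : ∑ _b ∈ hT.toFinset, c = ∑ b ∈ hT.toFinset, {a ∈ S | f a = b}.ncard := by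
    rw [← ncard_eq_sum_ncard_fiber hS hT hf, Finset.sum_const, smul_eq_mul,
      ← Set.ncard_eq_toFinset_card T hT]
    exact le_antisymm (ncard_mul_le_ncard_of_fiber hS hT hf hc) hle
  have heq := (Finset.sum_eq_sum_iff_of_le (by simpa using hc)).1 hsum
  exact fun b hb ↦ (heq b (by simpa using hb)).symm

theorem ncard_biUnion_le_ncard_mul (hS : S.Finite) {g : α → Set β}
    (hc : ∀ a ∈ S, (g a).ncard ≤ c) : (⋃ a ∈ S, g a).ncard ≤ S.ncard * c := by
  refine (hS.ncard_biUnion_le g).trans ?_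
  rw [finsum_mem_eq_finite_toFinset_sum _ hS, Set.ncard_eq_toFinset_card S hS]
  exact Finset.sum_le_card_nsmul _ _ c (by simpa using hc)

end Fibers

section VectorSpace

variable {F V : Type*} [Field F] [AddCommGroup V] [Module F V]

section Dimension

variable [FiniteDimensional F V] {U G H L W p x Y : Submodule F V}

theorem finrank_sup_eq_add_one (hp : finrank F p = 1) (h : ¬ p ≤ U) :
    finrank F ↥(U ⊔ p) = finrank F U + 1 := by
  have hdisj : Disjoint U p := ((isAtom_iff_finrank_eq_one.2 hp).not_le_iff_disjoint.1 h).symm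
  rw [← hp, ← finrank_sup_add_finrank_inf_eq, hdisj.eq_bot, finrank_bot, add_zero]

theorem sup_eq_of_finrank_eq_add_one (hUG : U ≤ G) (hWG : W ≤ G)
    (hG : finrank F G = finrank F U + 1) (h : ¬ W ≤ U) : U ⊔ W = G := by
  have hlt := finrank_lt_finrank_of_lt (left_lt_sup.2 h)
  exact eq_of_le_of_finrank_le (sup_le hUG hWG) (by omega)

theorem inf_eq_of_finrank_add_one_eq (hWH : W ≤ H) (hWL : W ≤ L)
    (hL : finrank F W + 1 = finrank F L) (h : ¬ L ≤ H) : H ⊓ L = W := by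
  have hlt := finrank_lt_finrank_of_lt (inf_lt_right.2 h)
  exact (eq_of_le_of_finrank_le (le_inf hWH hWL) (by omega)).symm

theorem finrank_inf_add_one (hH : finrank F H + 1 = finrank F V) (h : ¬ L ≤ H) :
    finrank F ↥(H ⊓ L) + 1 = finrank F L := by
  have hsum := finrank_sup_add_finrank_inf_eq H L
  have hlt := finrank_lt_finrank_of_lt (left_lt_sup.2 h)
  have hle := finrank_le (H ⊔ L)
  omega

theorem exists_le_finrank_add_one_eq_of_disjoint (hxG : x ≤ G) (hYG : Y ≤ G)
    (hx : finrank F x = 1) (hxY : Disjoint x Y) :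
    ∃ U, Y ≤ U ∧ U ≤ G ∧ finrank F U + 1 = finrank F G ∧ ¬ x ≤ U := by
  obtain ⟨C, hYC, hC⟩ := hxY.symm.exists_isCompl
  have hdisj : Disjoint (C ⊓ G) x := hC.disjoint.mono_left inf_le_left
  have hxU : ¬ x ≤ C ⊓ G := fun h ↦
    (isAtom_iff_finrank_eq_one.2 hx).1 (disjoint_self.1 (hdisj.mono_left h))
  have hsup : C ⊓ G ⊔ x = G := by
    rw [inf_comm, inf_sup_assoc_of_le C hxG, hC.sup_eq_top, inf_top_eq]
  refine ⟨C ⊓ G, le_inf hYC hYG, inf_le_right, ?_, hxU⟩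
  rw [← finrank_sup_eq_add_one hx hxU, hsup]

theorem finrank_dualAnnihilator_add_finrank (W : Submodule F V) :
    finrank F W.dualAnnihilator + finrank F W = finrank F V := by
  rw [add_comm, Subspace.finrank_add_finrank_dualAnnihilator_eq]

end Dimension

section Counting

theorem pow_sub_pow_eq_geom_sum_mul {q : ℕ} (hq : 0 < q) (u d c : ℕ) :
    q ^ (u + d + c) - q ^ (u + d)
      = (q ^ d * ∑ i ∈ Finset.range c, q ^ i) * (q ^ (u + 1) - q ^ u) := by
  obtain ⟨r, rfl⟩ := Nat.exists_eq_add_one.2 hq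
  rw [pow_succ, ← Nat.mul_sub_one, Nat.add_sub_cancel, pow_add _ (u + d), ← geom_sum_mul_add r c,
    mul_add, mul_one, Nat.add_sub_cancel, pow_add]
  ring

variable [Finite V]

theorem ncard_coe_submodule (W : Submodule F V) :
    (W : Set V).ncard = Nat.card F ^ finrank F W :=
  natCard_eq_pow_finrank

theorem ncard_coe_sdiff {A B : Submodule F V} (h : A ≤ B) :
    ((B : Set V) \ A).ncard = Nat.card F ^ finrank F B - Nat.card F ^ finrank F A := by
  rw [Set.ncard_sdiff h, ncard_coe_submodule, ncard_coe_submodule]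

variable [Finite F]

-- Each vector of `M` outside `K` spans with `U` one such cover `G`, and `G` arises from the
-- vectors of `G` outside `U`.
theorem ncard_covers_not_le {U K M : Submodule F V} {c d : ℕ} (hUK : U ≤ K) (hKM : K ≤ M)
    (hK : finrank F K = finrank F U + d) (hM : finrank F M = finrank F K + c) :
    {G | U ≤ G ∧ G ≤ M ∧ finrank F G = finrank F U + 1 ∧ ¬ G ≤ K}.ncard
      = Nat.card F ^ d * ∑ i ∈ Finset.range c, Nat.card F ^ i := by
  set T := {G | U ≤ G ∧ G ≤ M ∧ finrank F G = finrank F U + 1 ∧ ¬ G ≤ K}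
  have hmaps : ((M : Set V) \ K).MapsTo (fun v ↦ U ⊔ span F {v}) T := by
    rintro v ⟨hvM, hvK⟩
    refine ⟨le_sup_left, sup_le (hUK.trans hKM) ?_,
      finrank_sup_span_singleton fun h ↦ hvK (hUK h),
      fun h ↦ hvK (h (mem_sup_right (mem_span_singleton_self v)))⟩
    rwa [span_singleton_le_iff_mem]
  have hfiber : ∀ G ∈ T, {v ∈ (M : Set V) \ K | U ⊔ span F {v} = G} = (G : Set V) \ U := by
    rintro G ⟨hUG, hGM, hG, hGK⟩
    ext v
    constructor
    · rintro ⟨⟨-, hvK⟩, rfl⟩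
      exact ⟨mem_sup_right (mem_span_singleton_self v), fun h ↦ hvK (hUK h)⟩
    · rintro ⟨hvG, hvU⟩
      have hsup : U ⊔ span F {v} = G := sup_eq_of_finrank_eq_add_one hUG
        (by rwa [span_singleton_le_iff_mem]) hG (by rwa [span_singleton_le_iff_mem])
      refine ⟨⟨hGM hvG, fun hvK ↦ hGK ?_⟩, hsup⟩
      rw [← hsup]
      exact sup_le hUK (by rwa [span_singleton_le_iff_mem])
  have hcount := ncard_eq_ncard_mul_of_fiber (Set.toFinite _) (Set.toFinite T) hmaps
    fun G hG ↦ by rw [hfiber G hG, ncard_coe_sdiff hG.1, hG.2.2.1]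
  rw [ncard_coe_sdiff hKM, hM, hK] at hcount
  rw [pow_sub_pow_eq_geom_sum_mul Nat.card_pos] at hcount
  have hlt : Nat.card F ^ finrank F U < Nat.card F ^ (finrank F U + 1) :=
    Nat.pow_lt_pow_right Finite.one_lt_card (Nat.lt_succ_self _)
  exact (Nat.eq_of_mul_eq_mul_right (Nat.sub_pos_of_lt hlt) hcount).symm

theorem ncard_maximal_not_ge {X S M : Submodule F V} {c d : ℕ} (hXS : X ≤ S) (hSM : S ≤ M)
    (hS : finrank F S = finrank F X + c) (hM : finrank F M = finrank F S + d) :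
    {H | X ≤ H ∧ H ≤ M ∧ finrank F H + 1 = finrank F M ∧ ¬ S ≤ H}.ncard
      = Nat.card F ^ d * ∑ i ∈ Finset.range c, Nat.card F ^ i := by
  have : Finite (Dual F V) := Module.finite_of_finite F
  have hdim := finrank_dualAnnihilator_add_finrank (F := F) (V := V)
  rw [← ncard_covers_not_le (Subspace.dualAnnihilator_le_dualAnnihilator_iff.2 hSM)
      (Subspace.dualAnnihilator_le_dualAnnihilator_iff.2 hXS)
      (by have := hdim M; have := hdim S; omega) (by have := hdim X; have := hdim S; omega)]
  refine Set.ncard_congr (fun H _ ↦ H.dualAnnihilator) ?_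
    (fun _ _ _ _ h ↦ Subspace.dualAnnihilator_inj.1 h) ?_
  · rintro H ⟨hXH, hHM, hH, hSH⟩
    have := hdim H
    have := hdim M
    simp only [Set.mem_ofPred_eq, Subspace.dualAnnihilator_le_dualAnnihilator_iff]
    exact ⟨hHM, hXH, by omega, hSH⟩
  · intro G hG
    obtain ⟨H, rfl⟩ : ∃ H : Submodule F V, H.dualAnnihilator = G :=
      ⟨G.dualCoannihilator, Subspace.dualCoannihilator_dualAnnihilator_eq⟩
    have := hdim H
    have := hdim M
    simp only [Set.mem_ofPred_eq, Subspace.dualAnnihilator_le_dualAnnihilator_iff] at hG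
    exact ⟨H, ⟨hG.2.1, hG.1, by omega, hG.2.2.2⟩, rfl⟩

theorem geom_sum_le_ncard_of_forall_exists_le {t : ℕ} {B : Set (Submodule F V)}
    (ht : t ≤ finrank F V) (htop : ⊤ ∉ B)
    (hB : ∀ W : Submodule F V, finrank F W = t → ∃ H ∈ B, W ≤ H) :
    ∑ i ∈ Finset.range (t + 1), Nat.card F ^ i ≤ B.ncard := by
  obtain ⟨S, ⟨htS, hSB⟩, hmin⟩ := exists_minimal_of_wellFoundedLT
    (fun S : Submodule F V ↦ t ≤ finrank F S ∧ ∀ H ∈ B, ¬ S ≤ H)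
    ⟨⊤, by rwa [finrank_top], fun H hH h ↦ htop (top_le_iff.1 h ▸ hH)⟩
  have hne : finrank F S ≠ t := fun h ↦ by
    obtain ⟨H, hH, hSH⟩ := hB S h
    exact hSB H hH hSH
  have hsub : {W | ⊥ ≤ W ∧ W ≤ S ∧ finrank F W + 1 = finrank F S ∧ ¬ S ≤ W} ⊆ (· ⊓ S) '' B := by
    rintro W ⟨-, hWS, hW, hSW⟩
    obtain ⟨H, hH, hWH⟩ : ∃ H ∈ B, W ≤ H := by
      by_contra! hWB
      exact hSW (hmin ⟨by omega, hWB⟩ hWS)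
    exact ⟨H, hH, inf_eq_of_finrank_add_one_eq hWH hWS hW (hSB H hH)⟩
  calc ∑ i ∈ Finset.range (t + 1), Nat.card F ^ i
      ≤ ∑ i ∈ Finset.range (finrank F S), Nat.card F ^ i :=
        Finset.sum_le_sum_of_subset (Finset.range_mono (by omega))
    _ = {W | ⊥ ≤ W ∧ W ≤ S ∧ finrank F W + 1 = finrank F S ∧ ¬ S ≤ W}.ncard := by
        rw [ncard_maximal_not_ge bot_le le_rfl (by rw [finrank_bot, zero_add]) (add_zero _).symm,
          pow_zero, one_mul]
    _ ≤ ((· ⊓ S) '' B).ncard := Set.ncard_le_ncard hsub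
    _ ≤ B.ncard := Set.ncard_image_le

end Counting

section BlockingSets

variable {k d : ℕ} {B₀ Bₙ : Set (Submodule F V)} {U G H x : Submodule F V}

/-- `B₀ ∪ Bₙ` is a blocking set of points and hyperplanes with respect to the `k`-spaces of the
projective space of `V`. Projective subspaces are encoded as linear subspaces, so that points have
dimension `1` and `k`-spaces have dimension `k + 1`. -/
structure IsBlockingSet (k : ℕ) (B₀ Bₙ : Set (Submodule F V)) : Prop where
  finrank_point : ∀ p ∈ B₀, finrank F p = 1
  finrank_hyperplane : ∀ H ∈ Bₙ, finrank F H + 1 = finrank F V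
  blocks : ∀ W : Submodule F V, finrank F W = k + 1 → (∃ p ∈ B₀, p ≤ W) ∨ ∃ H ∈ Bₙ, W ≤ H

/-- The subspace `U` contains no point of `B₀`, so that each `k`-space through it is blocked by a
point outside it or by a hyperplane. -/
def IsSkew (B₀ : Set (Submodule F V)) (U : Submodule F V) : Prop :=
  ∀ p ∈ B₀, ¬ p ≤ U

/-- The members of `Bₙ` containing `U`; their number is minimized in `IsOptimal`. -/
def hyperplanesThrough (Bₙ : Set (Submodule F V)) (U : Submodule F V) : Set (Submodule F V) :=
  {H ∈ Bₙ | U ≤ H}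

/-- A `k`-space `G` blocked by the point `x` alone. -/
structure IsTangentSpace (k : ℕ) (B₀ Bₙ : Set (Submodule F V)) (x G : Submodule F V) : Prop where
  finrank_eq : finrank F G = k + 1
  le : x ≤ G
  eq_of_le : ∀ p ∈ B₀, p ≤ G → p = x
  not_le : ∀ H ∈ Bₙ, ¬ G ≤ H

/-- The hyperplanes of `G` not containing `x`; if `G` is tangent at `x`, they are skew to `B₀`. -/
def maximalAvoiding (x G : Submodule F V) : Set (Submodule F V) :=
  {U | U ≤ G ∧ finrank F U + 1 = finrank F G ∧ ¬ x ≤ U}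

/-- A `(k - 1)`-space that misses `B₀` and lies on as few hyperplanes of `Bₙ` as possible. -/
structure IsOptimal (k : ℕ) (B₀ Bₙ : Set (Submodule F V)) (U : Submodule F V) : Prop where
  finrank_eq : finrank F U = k
  isSkew : IsSkew B₀ U
  ncard_le : ∀ W : Submodule F V, finrank F W = k → IsSkew B₀ W →
    (hyperplanesThrough Bₙ U).ncard ≤ (hyperplanesThrough Bₙ W).ncard

theorem IsBlockingSet.disjoint_of_isSkew (hB : IsBlockingSet k B₀ Bₙ) (hU : IsSkew B₀ U)
    (hx : x ∈ B₀) : Disjoint x U :=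
  (isAtom_iff_finrank_eq_one.2 (hB.finrank_point x hx)).not_le_iff_disjoint.1 (hU x hx)

theorem IsTangentSpace.isSkew (hG : IsTangentSpace k B₀ Bₙ x G) (hUG : U ≤ G) (hxU : ¬ x ≤ U) :
    IsSkew B₀ U :=
  fun p hp hpU ↦ hxU (hG.eq_of_le p hp (hpU.trans hUG) ▸ hpU)

theorem IsBlockingSet.exists_isTangentSpace (hB : Minimal (IsBlockingSet k · Bₙ) B₀)
    (hx : x ∈ B₀) : ∃ G, IsTangentSpace k B₀ Bₙ x G := by
  have hnot : ¬ IsBlockingSet k (B₀ \ {x}) Bₙ := fun h ↦ (hB.le_of_le h Set.sdiff_subset hx).2 rfl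
  obtain ⟨W, hW, hW₀, hWₙ⟩ : ∃ W : Submodule F V, finrank F W = k + 1 ∧
      (∀ p ∈ B₀ \ {x}, ¬ p ≤ W) ∧ ∀ H ∈ Bₙ, ¬ W ≤ H := by
    by_contra! h
    refine hnot ⟨fun p hp ↦ hB.prop.finrank_point p hp.1, hB.prop.finrank_hyperplane,
      fun W hW ↦ or_iff_not_imp_left.2 fun hp ↦ h W hW ?_⟩
    simpa using hp
  have heq : ∀ p ∈ B₀, p ≤ W → p = x := fun p hp hpW ↦ by
    by_contra hne
    exact hW₀ p ⟨hp, hne⟩ hpW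
  obtain ⟨p, hp, hpW⟩ | ⟨H, hH, hWH⟩ := hB.prop.blocks W hW
  · exact ⟨W, hW, heq p hp hpW ▸ hpW, heq, hWₙ⟩
  · exact absurd hWH (hWₙ H hH)

section FiniteDimensional

variable [FiniteDimensional F V]

theorem IsBlockingSet.exists_sup_eq_or_exists_le (hB : IsBlockingSet k B₀ Bₙ)
    (hU : finrank F U = k) (hskew : IsSkew B₀ U) (hUG : U ≤ G)
    (hG : finrank F G = finrank F U + 1) :
    (∃ p ∈ B₀, U ⊔ p = G) ∨ ∃ H ∈ hyperplanesThrough Bₙ U, G ≤ H := by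
  obtain ⟨p, hp, hpG⟩ | ⟨H, hH, hGH⟩ := hB.blocks G (hG.trans (by rw [hU]))
  · exact .inl ⟨p, hp, sup_eq_of_finrank_eq_add_one hUG hpG hG (hskew p hp)⟩
  · exact .inr ⟨H, ⟨hH, hUG.trans hGH⟩, hGH⟩

theorem IsTangentSpace.fiber_inf_eq (hG : IsTangentSpace k B₀ Bₙ x G)
    (hU : U ∈ maximalAvoiding x G) :
    {H ∈ {H ∈ Bₙ | ¬ x ≤ H} | H ⊓ G = U} = hyperplanesThrough Bₙ U := by
  obtain ⟨hUG, hdim, hxU⟩ := hU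
  ext H
  constructor
  · rintro ⟨⟨hH, -⟩, rfl⟩
    exact ⟨hH, inf_le_left⟩
  · rintro ⟨hH, hUH⟩
    have hinf : H ⊓ G = U := inf_eq_of_finrank_add_one_eq hUH hUG hdim (hG.not_le H hH)
    exact ⟨⟨hH, fun hxH ↦ hxU (hinf ▸ le_inf hxH hG.le)⟩, hinf⟩

theorem IsTangentSpace.mapsTo_inf (hB : IsBlockingSet k B₀ Bₙ) (hG : IsTangentSpace k B₀ Bₙ x G) :
    {H ∈ Bₙ | ¬ x ≤ H}.MapsTo (· ⊓ G) (maximalAvoiding x G) :=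
  fun H hH ↦ ⟨inf_le_right,
    finrank_inf_add_one (hB.finrank_hyperplane H hH.1) (hG.not_le H hH.1),
    fun h ↦ hH.2 (h.trans inf_le_left)⟩

theorem IsOptimal.ncard_le_ncard_fiber_inf (hU : IsOptimal k B₀ Bₙ U)
    (hG : IsTangentSpace k B₀ Bₙ x G) {W : Submodule F V} (hW : W ∈ maximalAvoiding x G) :
    (hyperplanesThrough Bₙ U).ncard ≤ {H ∈ {H ∈ Bₙ | ¬ x ≤ H} | H ⊓ G = W}.ncard := by
  rw [hG.fiber_inf_eq hW]
  exact hU.ncard_le W (by have := hW.2.1.trans hG.finrank_eq; omega) (hG.isSkew hW.1 hW.2.2)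

end FiniteDimensional

variable [Finite V]

theorem IsTangentSpace.exists_isOptimal (hG : IsTangentSpace k B₀ Bₙ x G)
    (hx : finrank F x = 1) : ∃ U, IsOptimal k B₀ Bₙ U := by
  obtain ⟨U, -, hUG, hU, hxU⟩ := exists_le_finrank_add_one_eq_of_disjoint hG.le bot_le hx
    disjoint_bot_right
  have hUk : finrank F U = k := by rw [hG.finrank_eq] at hU; omega
  obtain ⟨W, ⟨hW, hskew⟩, hmin⟩ := Set.exists_min_image
    {W : Submodule F V | finrank F W = k ∧ IsSkew B₀ W}
    (fun W ↦ (hyperplanesThrough Bₙ W).ncard) (Set.toFinite _)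
    ⟨U, hUk, hG.isSkew hUG hxU⟩
  exact ⟨W, hW, hskew, fun W' hW' hskew' ↦ hmin W' ⟨hW', hskew'⟩⟩

variable [Finite F]

theorem IsTangentSpace.ncard_maximalAvoiding (hG : IsTangentSpace k B₀ Bₙ x G)
    (hx : finrank F x = 1) : (maximalAvoiding x G).ncard = Nat.card F ^ k := by
  have hcount := ncard_maximal_not_ge (c := 1) (d := k) bot_le hG.le (by rw [hx, finrank_bot])
    (by rw [hG.finrank_eq, hx, add_comm])
  simpa [maximalAvoiding] using hcount

theorem IsOptimal.ncard_mul_pow_le (hU : IsOptimal k B₀ Bₙ U) (hB : IsBlockingSet k B₀ Bₙ)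
    (hG : IsTangentSpace k B₀ Bₙ x G) (hx : finrank F x = 1) :
    (hyperplanesThrough Bₙ U).ncard * Nat.card F ^ k ≤ {H ∈ Bₙ | ¬ x ≤ H}.ncard := by
  rw [mul_comm, ← hG.ncard_maximalAvoiding hx]
  exact ncard_mul_le_ncard_of_fiber (Set.toFinite _) (Set.toFinite _) (hG.mapsTo_inf hB)
    fun W ↦ hU.ncard_le_ncard_fiber_inf hG

theorem IsOptimal.of_mem_maximalAvoiding (hU : IsOptimal k B₀ Bₙ U) (hB : IsBlockingSet k B₀ Bₙ)
    (hG : IsTangentSpace k B₀ Bₙ x G) (hx : finrank F x = 1)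
    (hle : Bₙ.ncard ≤ (hyperplanesThrough Bₙ U).ncard * Nat.card F ^ k)
    {W : Submodule F V} (hW : W ∈ maximalAvoiding x G) : IsOptimal k B₀ Bₙ W := by
  have hle' : {H ∈ Bₙ | ¬ x ≤ H}.ncard
      ≤ (maximalAvoiding x G).ncard * (hyperplanesThrough Bₙ U).ncard := by
    rw [hG.ncard_maximalAvoiding hx, mul_comm]
    exact (Set.ncard_le_ncard (Set.sep_subset _ _)).trans hle
  have hfiber := ncard_fiber_eq_of_ncard_le (Set.toFinite _) (Set.toFinite _) (hG.mapsTo_inf hB)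
    (fun W ↦ hU.ncard_le_ncard_fiber_inf hG) hle' W hW
  rw [hG.fiber_inf_eq hW] at hfiber
  exact ⟨by have := hW.2.1.trans hG.finrank_eq; omega, hG.isSkew hW.1 hW.2.2,
    fun W' hW' hskew ↦ hfiber.trans_le (hU.ncard_le W' hW' hskew)⟩

-- The `q ^ (d + 1)` covers of `U` off `H₁` are blocked by a point outside `H₁` or by one of the
-- remaining hyperplanes through `U`, each of which contains only `q ^ d` of them.
theorem IsBlockingSet.le_ncard_image_sup_add (hB : IsBlockingSet k B₀ Bₙ)
    (hV : finrank F V = k + d + 2) (hU : finrank F U = k) (hskew : IsSkew B₀ U)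
    {H₁ : Submodule F V} (hH₁ : H₁ ∈ hyperplanesThrough Bₙ U) :
    (Nat.card F + 1) * Nat.card F ^ d ≤ ((U ⊔ ·) '' {p ∈ B₀ | ¬ p ≤ H₁}).ncard
      + (hyperplanesThrough Bₙ U).ncard * Nat.card F ^ d := by
  have hH₁V := hB.finrank_hyperplane H₁ hH₁.1
  let covers (M K : Submodule F V) : Set (Submodule F V) :=
    {G | U ≤ G ∧ G ≤ M ∧ finrank F G = finrank F U + 1 ∧ ¬ G ≤ K}
  have hcovers : (covers ⊤ H₁).ncard = Nat.card F ^ (d + 1) := by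
    rw [ncard_covers_not_le (d := d + 1) (c := 1) hH₁.2 le_top (by omega)
      (by rw [finrank_top]; omega)]
    simp
  have hcovered : covers ⊤ H₁ ⊆ (U ⊔ ·) '' {p ∈ B₀ | ¬ p ≤ H₁}
      ∪ ⋃ H ∈ hyperplanesThrough Bₙ U \ {H₁}, covers H (H₁ ⊓ H) := by
    rintro G ⟨hUG, -, hG, hGH₁⟩
    obtain ⟨p, hp, rfl⟩ | ⟨H, hH, hGH⟩ := hB.exists_sup_eq_or_exists_le hU hskew hUG hG
    · exact .inl ⟨p, ⟨hp, fun h ↦ hGH₁ (sup_le hH₁.2 h)⟩, rfl⟩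
    · exact .inr (Set.mem_biUnion ⟨hH, fun h ↦ hGH₁ (h ▸ hGH)⟩
        ⟨hUG, hGH, hG, fun h ↦ hGH₁ (h.trans inf_le_left)⟩)
  have hcovers_le : ∀ H ∈ hyperplanesThrough Bₙ U \ {H₁},
      (covers H (H₁ ⊓ H)).ncard ≤ Nat.card F ^ d := by
    rintro H ⟨hH, hne⟩
    have hHV := hB.finrank_hyperplane H hH.1
    have hinf := finrank_inf_add_one hH₁V
      fun h ↦ hne (eq_of_le_of_finrank_eq h (by omega))
    rw [ncard_covers_not_le (d := d) (c := 1) (le_inf hH₁.2 hH.2) inf_le_right (by omega)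
      hinf.symm]
    simp
  have hle := (Set.ncard_le_ncard hcovered).trans (Set.ncard_union_le _ _)
  have hunion := ncard_biUnion_le_ncard_mul (Set.toFinite _) hcovers_le
  rw [← Set.ncard_sdiff_singleton_add_one hH₁, add_one_mul, add_one_mul, ← pow_succ', ← hcovers]
  omega

theorem IsBlockingSet.geom_sum_le_ncard (hB : IsBlockingSet k B₀ Bₙ)
    (hV : finrank F V = k + d) (hU : finrank F U = k) (hskew : IsSkew B₀ U)
    (hthrough : hyperplanesThrough Bₙ U = ∅) :
    ∑ i ∈ Finset.range d, Nat.card F ^ i ≤ B₀.ncard := by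
  have hcovers := ncard_covers_not_le (d := 0) (c := d) (le_refl U) le_top rfl
    (by rw [finrank_top, hV, hU])
  rw [pow_zero, one_mul] at hcovers
  rw [← hcovers]
  refine (Set.ncard_le_ncard ?_).trans (Set.ncard_image_le (f := (U ⊔ ·)))
  rintro G ⟨hUG, -, hG, -⟩
  obtain ⟨p, hp, hpG⟩ | ⟨H, hH, -⟩ := hB.exists_sup_eq_or_exists_le hU hskew hUG hG
  · exact ⟨p, hp, hpG⟩
  · simp [hthrough] at hH

end BlockingSets

section Bound

variable [Finite F] [Finite V] {k : ℕ} {B₀ Bₙ : Set (Submodule F V)} {U : Submodule F V}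

theorem add_one_mul_pow_lt_geom_sum {q : ℕ} (hk : 1 ≤ k) :
    (q + 1) * q ^ k < ∑ i ∈ Finset.range (k + 2), q ^ i := by
  have hpos : 0 < ∑ i ∈ Finset.range k, q ^ i := geom_sum_pos q.zero_le (by omega)
  rw [Finset.sum_range_succ, Finset.sum_range_succ, add_one_mul, ← pow_succ']
  omega

theorem IsBlockingSet.lt_ncard_of_points_eq_empty (hB : IsBlockingSet k ∅ Bₙ) (hk : 1 ≤ k)
    (hV : k + 1 ≤ finrank F V) : (Nat.card F + 1) * Nat.card F ^ k < Bₙ.ncard := by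
  refine (add_one_mul_pow_lt_geom_sum hk).trans_le (geom_sum_le_ncard_of_forall_exists_le hV
    (fun h ↦ ?_) fun W hW ↦ ?_)
  · simpa using hB.finrank_hyperplane ⊤ h
  · simpa using hB.blocks W hW

theorem IsBlockingSet.lt_ncard_of_through_eq_empty (hB : IsBlockingSet k B₀ Bₙ) (hk : 1 ≤ k)
    (hV : finrank F V = 2 * k + 2) (hU : finrank F U = k) (hskew : IsSkew B₀ U)
    (hthrough : hyperplanesThrough Bₙ U = ∅) : (Nat.card F + 1) * Nat.card F ^ k < B₀.ncard :=
  (add_one_mul_pow_lt_geom_sum hk).trans_le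
    (hB.geom_sum_le_ncard (by omega) hU hskew hthrough)

theorem IsBlockingSet.le_ncard_add_ncard_through_mul (hB : IsBlockingSet k B₀ Bₙ) (hk : 1 ≤ k)
    (hV : finrank F V = 2 * k + 2) (hU : finrank F U = k) (hskew : IsSkew B₀ U) :
    (Nat.card F + 1) * Nat.card F ^ k
      ≤ B₀.ncard + (hyperplanesThrough Bₙ U).ncard * Nat.card F ^ k := by
  obtain hempty | ⟨H₁, hH₁⟩ := (hyperplanesThrough Bₙ U).eq_empty_or_nonempty
  · exact (hB.lt_ncard_of_through_eq_empty hk hV hU hskew hempty).le.trans (Nat.le_add_right _ _)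
  · refine (hB.le_ncard_image_sup_add (by omega) hU hskew hH₁).trans (Nat.add_le_add_right ?_ _)
    exact (Set.ncard_image_le (Set.toFinite _)).trans (Set.ncard_le_ncard (Set.sep_subset _ _))

theorem IsBlockingSet.le_ncard_add_ncard (hB : IsBlockingSet k B₀ Bₙ) (hk : 1 ≤ k)
    (hV : finrank F V = 2 * k + 2) :
    (Nat.card F + 1) * Nat.card F ^ k ≤ B₀.ncard + Bₙ.ncard := by
  obtain ⟨B, hBB₀, hmin⟩ := exists_minimal_le_of_wellFoundedLT (IsBlockingSet k · Bₙ) B₀ hB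
  suffices (Nat.card F + 1) * Nat.card F ^ k ≤ B.ncard + Bₙ.ncard from
    this.trans (Nat.add_le_add_right (Set.ncard_le_ncard hBB₀) _)
  obtain rfl | ⟨x, hx⟩ := B.eq_empty_or_nonempty
  · exact (hmin.prop.lt_ncard_of_points_eq_empty hk (by omega)).le.trans (Nat.le_add_left _ _)
  · obtain ⟨G, hG⟩ := IsBlockingSet.exists_isTangentSpace hmin hx
    have hx1 := hmin.prop.finrank_point x hx
    obtain ⟨U, hU⟩ := hG.exists_isOptimal hx1
    refine (hmin.prop.le_ncard_add_ncard_through_mul hk hV hU.finrank_eq hU.isSkew).trans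
      (Nat.add_le_add_left ?_ _)
    exact (hU.ncard_mul_pow_le hmin.prop hG hx1).trans (Set.ncard_le_ncard (Set.sep_subset _ _))

end Bound

section Tight

variable {k : ℕ} {B₀ Bₙ : Set (Submodule F V)} {D U H x : Submodule F V}

/-- A blocking set attaining the bound `(q + 1) * q ^ k` in `PG(2 * k + 1, q)` with `1 ≤ k`. -/
structure IsTight (k : ℕ) (B₀ Bₙ : Set (Submodule F V)) : Prop extends
    IsBlockingSet k B₀ Bₙ where
  one_le : 1 ≤ k
  finrank_eq : finrank F V = 2 * k + 2
  ncard_add_ncard : B₀.ncard + Bₙ.ncard = (Nat.card F + 1) * Nat.card F ^ k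

namespace IsTight

variable [Finite F] [Finite V]

theorem minimal (hB : IsTight k B₀ Bₙ) : Minimal (IsBlockingSet k · Bₙ) B₀ := by
  refine ⟨hB.toIsBlockingSet, fun B hBk hle ↦ (Set.eq_of_subset_of_ncard_le hle ?_).ge⟩
  have := hBk.le_ncard_add_ncard hB.one_le hB.finrank_eq
  have := hB.ncard_add_ncard
  omega

theorem points_nonempty (hB : IsTight k B₀ Bₙ) : B₀.Nonempty := by
  rw [Set.nonempty_iff_ne_empty]
  rintro rfl
  have := hB.lt_ncard_of_points_eq_empty hB.one_le (by have := hB.finrank_eq; omega)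
  have := hB.ncard_add_ncard
  omega

theorem exists_isOptimal (hB : IsTight k B₀ Bₙ) : ∃ U, IsOptimal k B₀ Bₙ U := by
  obtain ⟨x, hx⟩ := hB.points_nonempty
  obtain ⟨G, hG⟩ := IsBlockingSet.exists_isTangentSpace hB.minimal hx
  exact hG.exists_isOptimal (hB.finrank_point x hx)

theorem ncard_hyperplanes (hB : IsTight k B₀ Bₙ) (hU : IsOptimal k B₀ Bₙ U) :
    Bₙ.ncard = (hyperplanesThrough Bₙ U).ncard * Nat.card F ^ k := by
  obtain ⟨x, hx⟩ := hB.points_nonempty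
  obtain ⟨G, hG⟩ := IsBlockingSet.exists_isTangentSpace hB.minimal hx
  have hge := (hU.ncard_mul_pow_le hB.toIsBlockingSet hG (hB.finrank_point x hx)).trans
    (Set.ncard_le_ncard (Set.sep_subset _ _))
  have hle := hB.le_ncard_add_ncard_through_mul hB.one_le hB.finrank_eq hU.finrank_eq hU.isSkew
  have := hB.ncard_add_ncard
  omega

theorem hyperplanesThrough_nonempty (hB : IsTight k B₀ Bₙ) (hU : IsOptimal k B₀ Bₙ U) :
    (hyperplanesThrough Bₙ U).Nonempty := by
  rw [Set.nonempty_iff_ne_empty]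
  intro hempty
  have := hB.lt_ncard_of_through_eq_empty hB.one_le hB.finrank_eq hU.finrank_eq hU.isSkew hempty
  have := hB.ncard_add_ncard
  omega

theorem hyperplanes_nonempty (hB : IsTight k B₀ Bₙ) : Bₙ.Nonempty := by
  obtain ⟨U, hU⟩ := hB.exists_isOptimal
  exact (hB.hyperplanesThrough_nonempty hU).mono (Set.sep_subset _ _)

theorem ncard_points_le_ncard_image_sup (hB : IsTight k B₀ Bₙ) (hU : IsOptimal k B₀ Bₙ U)
    (hH : H ∈ hyperplanesThrough Bₙ U) :
    B₀.ncard ≤ ((U ⊔ ·) '' {p ∈ B₀ | ¬ p ≤ H}).ncard := by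
  have hle := hB.le_ncard_image_sup_add (d := k) (by have := hB.finrank_eq; omega) hU.finrank_eq
    hU.isSkew hH
  have := hB.ncard_hyperplanes hU
  have := hB.ncard_add_ncard
  omega

theorem not_le_of_mem_hyperplanesThrough (hB : IsTight k B₀ Bₙ) (hU : IsOptimal k B₀ Bₙ U)
    (hH : H ∈ hyperplanesThrough Bₙ U) (hx : x ∈ B₀) : ¬ x ≤ H := by
  have heq : {p ∈ B₀ | ¬ p ≤ H} = B₀ := Set.eq_of_subset_of_ncard_le (Set.sep_subset _ _)
    ((hB.ncard_points_le_ncard_image_sup hU hH).trans (Set.ncard_image_le (Set.toFinite _)))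
  exact (heq.ge hx).2

theorem injOn_sup (hB : IsTight k B₀ Bₙ) (hU : IsOptimal k B₀ Bₙ U) : B₀.InjOn (U ⊔ ·) := by
  obtain ⟨H, hH⟩ := hB.hyperplanesThrough_nonempty hU
  refine Set.injOn_of_ncard_image_eq ((Set.ncard_image_le (Set.toFinite _)).antisymm ?_)
  exact (hB.ncard_points_le_ncard_image_sup hU hH).trans
    (Set.ncard_le_ncard (Set.image_mono (Set.sep_subset _ _)))

theorem isTangentSpace_sup (hB : IsTight k B₀ Bₙ) (hU : IsOptimal k B₀ Bₙ U) (hx : x ∈ B₀) :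
    IsTangentSpace k B₀ Bₙ x (U ⊔ x) where
  finrank_eq := by
    rw [finrank_sup_eq_add_one (hB.finrank_point x hx) (hU.isSkew x hx), hU.finrank_eq]
  le := le_sup_right
  eq_of_le p hp hpG := by
    refine hB.injOn_sup hU hp hx (sup_eq_of_finrank_eq_add_one le_sup_left hpG ?_ (hU.isSkew p hp))
    exact finrank_sup_eq_add_one (hB.finrank_point x hx) (hU.isSkew x hx)
  not_le H hH hle := hB.not_le_of_mem_hyperplanesThrough hU ⟨hH, le_sup_left.trans hle⟩ hx
    (le_sup_right.trans hle)

theorem not_le (hB : IsTight k B₀ Bₙ) (hx : x ∈ B₀) (hH : H ∈ Bₙ) : ¬ x ≤ H := by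
  obtain ⟨U, hU⟩ := hB.exists_isOptimal
  have hle := hU.ncard_mul_pow_le hB.toIsBlockingSet (hB.isTangentSpace_sup hU hx)
    (hB.finrank_point x hx)
  have heq : {H ∈ Bₙ | ¬ x ≤ H} = Bₙ := Set.eq_of_subset_of_ncard_le (Set.sep_subset _ _)
    ((hB.ncard_hyperplanes hU).trans_le hle)
  exact (heq.ge hH).2

theorem exists_isOptimal_mem (hB : IsTight k B₀ Bₙ) (hU : IsOptimal k B₀ Bₙ U) (hx : x ∈ B₀)
    {v : V} (hv : v ∈ U ⊔ x) (hvx : v ∉ x) : ∃ W, IsOptimal k B₀ Bₙ W ∧ v ∈ W := by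
  have hx1 := hB.finrank_point x hx
  have hG := hB.isTangentSpace_sup hU hx
  obtain ⟨W, hvW, hW⟩ := exists_le_finrank_add_one_eq_of_disjoint hG.le
    ((span_singleton_le_iff_mem _ _).2 hv) hx1
    (disjoint_span_singleton_of_notMem hvx)
  exact ⟨W, hU.of_mem_maximalAvoiding hB.toIsBlockingSet hG hx1 (hB.ncard_hyperplanes hU).le hW,
    hvW (mem_span_singleton_self v)⟩

-- A nonzero `w ∈ U` contained in every hyperplane can be moved along `x = ⟨v⟩`: some optimal
-- subspace contains `w + v`, and then each hyperplane through it contains `v`.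
theorem disjoint_sInf_hyperplanes (hB : IsTight k B₀ Bₙ) (hU : IsOptimal k B₀ Bₙ U) :
    Disjoint (sInf Bₙ) U := by
  obtain ⟨x, hx⟩ := hB.points_nonempty
  obtain ⟨v, -, rfl⟩ := (atom_iff_nonzero_span x).1
    (isAtom_iff_finrank_eq_one.2 (hB.finrank_point x hx))
  have hv : v ∈ span F {v} := mem_span_singleton_self v
  rw [Submodule.disjoint_def]
  intro w hwB hwU
  by_contra hw0
  have hwv : w + v ∉ span F {v} := fun h ↦
    hw0 (Submodule.disjoint_def.1 (hB.disjoint_of_isSkew hU.isSkew hx) w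
      ((add_mem_cancel_right hv).1 h) hwU)
  obtain ⟨W, hW, hwvW⟩ := hB.exists_isOptimal_mem hU hx
    (add_mem (mem_sup_left hwU) (mem_sup_right hv)) hwv
  obtain ⟨H, hH, hWH⟩ := hB.hyperplanesThrough_nonempty hW
  refine hB.not_le hx hH ?_
  rw [span_singleton_le_iff_mem]
  exact (add_mem_cancel_left (mem_sInf.1 hwB H hH)).1 (hWH hwvW)

-- If `a + r` lies in `U` with `a ∈ x` and `r ∈ D`, then `r ∈ U ⊔ x` lies in some optimal subspace
-- unless it lies in `x`.
theorem disjoint_sup_of_mem (hB : IsTight k B₀ Bₙ) (hx : x ∈ B₀)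
    (hD : ∀ U, IsOptimal k B₀ Bₙ U → Disjoint D U) (hU : IsOptimal k B₀ Bₙ U) :
    Disjoint (x ⊔ D) U := by
  rw [Submodule.disjoint_def]
  intro w hw hwU
  obtain ⟨a, ha, r, hr, rfl⟩ := mem_sup.1 hw
  have hrUx : r ∈ U ⊔ x := by
    simpa using sub_mem (mem_sup_left (T := x) hwU) (mem_sup_right (S := U) ha)
  by_cases hrx : r ∈ x
  · exact Submodule.disjoint_def.1 (hB.disjoint_of_isSkew hU.isSkew hx) _ (add_mem ha hrx) hwU
  · obtain ⟨W, hW, hrW⟩ := hB.exists_isOptimal_mem hU hx hrUx hrx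
    have hr0 : r = 0 := Submodule.disjoint_def.1 (hD W hW) r hr hrW
    exact absurd (hr0 ▸ x.zero_mem) hrx

theorem disjoint_sSup_sup_sInf (hB : IsTight k B₀ Bₙ) (hU : IsOptimal k B₀ Bₙ U) :
    Disjoint (sSup B₀ ⊔ sInf Bₙ) U := by
  refine Set.Finite.induction_on_subset (motive := fun B _ ↦
    ∀ U, IsOptimal k B₀ Bₙ U → Disjoint (sSup B ⊔ sInf Bₙ) U) B₀ (Set.toFinite _) ?_ ?_ U hU
  · simpa using fun U ↦ hB.disjoint_sInf_hyperplanes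
  · intro x B hx _ _ ih U hU
    rw [sSup_insert, sup_assoc]
    exact hB.disjoint_sup_of_mem hx ih hU

theorem exists_finrank_eq_add_two (hB : IsTight k B₀ Bₙ) :
    ∃ S : Submodule F V, finrank F S = k + 2 ∧ (∀ p ∈ B₀, p ≤ S) ∧ sInf Bₙ ≤ S := by
  obtain ⟨U, hU⟩ := hB.exists_isOptimal
  obtain ⟨S, hS, hSU⟩ := (hB.disjoint_sSup_sup_sInf hU).exists_isCompl
  have hsum := finrank_add_eq_of_isCompl hSU
  have := hU.finrank_eq
  have := hB.finrank_eq
  exact ⟨S, by omega, fun p hp ↦ (le_sSup hp).trans (le_sup_left.trans hS), le_sup_right.trans hS⟩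

end IsTight

section Duality

theorem IsBlockingSet.dual [FiniteDimensional F V] (hB : IsBlockingSet k B₀ Bₙ)
    (hV : finrank F V = 2 * k + 2) :
    IsBlockingSet k (dualAnnihilator '' Bₙ) (dualAnnihilator '' B₀) where
  finrank_point := by
    rintro _ ⟨H, hH, rfl⟩
    have := hB.finrank_hyperplane H hH
    have := finrank_dualAnnihilator_add_finrank H
    omega
  finrank_hyperplane := by
    rintro _ ⟨p, hp, rfl⟩
    rw [Subspace.dual_finrank_eq, ← hB.finrank_point p hp, finrank_dualAnnihilator_add_finrank]
  blocks W hW := by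
    obtain ⟨W, rfl⟩ : ∃ U : Submodule F V, U.dualAnnihilator = W :=
      ⟨W.dualCoannihilator, Subspace.dualCoannihilator_dualAnnihilator_eq⟩
    have := finrank_dualAnnihilator_add_finrank W
    simpa only [Set.exists_mem_image, Subspace.dualAnnihilator_le_dualAnnihilator_iff]
      using (hB.blocks W (by omega)).symm

theorem IsTight.dual [FiniteDimensional F V] (hB : IsTight k B₀ Bₙ) :
    IsTight k (dualAnnihilator '' Bₙ) (dualAnnihilator '' B₀) where
  toIsBlockingSet := hB.toIsBlockingSet.dual hB.finrank_eq
  one_le := hB.one_le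
  finrank_eq := by rw [Subspace.dual_finrank_eq, hB.finrank_eq]
  ncard_add_ncard := by
    have hinj : Function.Injective (dualAnnihilator (R := F) (M := V)) :=
      fun _ _ ↦ Subspace.dualAnnihilator_inj.1
    rw [Set.ncard_image_of_injective _ hinj, Set.ncard_image_of_injective _ hinj, add_comm,
      hB.ncard_add_ncard]

theorem IsTight.exists_finrank_eq_le [Finite F] [Finite V] (hB : IsTight k B₀ Bₙ) :
    ∃ S : Submodule F V, finrank F S = k ∧ ∀ H ∈ Bₙ, S ≤ H := by
  have : Finite (Dual F V) := Module.finite_of_finite F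
  obtain ⟨S, hS, hle, -⟩ := hB.dual.exists_finrank_eq_add_two
  have hsum := Subspace.finrank_add_finrank_dualCoannihilator_eq S
  refine ⟨S.dualCoannihilator, by have := hB.finrank_eq; omega, fun H hH ↦ ?_⟩
  rw [← Subspace.dualAnnihilator_le_dualAnnihilator_iff,
    Subspace.dualCoannihilator_dualAnnihilator_eq]
  exact hle _ (Set.mem_image_of_mem _ hH)

end Duality

end Tight

section Construction

variable {k d : ℕ} {B₀ Bₙ K : Set (Submodule F V)} {S σ : Submodule F V}

/-- The `k`-spaces between `σ` and `S`. -/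
def pencil (k : ℕ) (σ S : Submodule F V) : Set (Submodule F V) :=
  {κ | finrank F κ = k + 1 ∧ σ ≤ κ ∧ κ ≤ S}

/-- The points in some member of `K` but not in `σ`. -/
def pencilPoints (σ : Submodule F V) (K : Set (Submodule F V)) : Set (Submodule F V) :=
  {p | finrank F p = 1 ∧ ∃ κ ∈ K, p ≤ κ ∧ ¬ p ≤ σ}

/-- The hyperplanes containing some member of `K` but not `S`. -/
def pencilHyperplanes (S : Submodule F V) (K : Set (Submodule F V)) : Set (Submodule F V) :=
  {H | finrank F H + 1 = finrank F V ∧ ∃ κ ∈ K, κ ≤ H ∧ ¬ S ≤ H}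

/-- The extremal blocking sets: a partition of a pencil into nonempty sets `K₁` and `K₂` yields
the points covered by `K₁` and the hyperplanes through the members of `K₂`. -/
def IsPencilBlockingSet (k : ℕ) (B₀ Bₙ : Set (Submodule F V)) : Prop :=
  ∃ (S σ : Submodule F V) (K₁ K₂ : Set (Submodule F V)), finrank F S = k + 2 ∧ finrank F σ = k ∧
    σ < S ∧ K₁.Nonempty ∧ K₂.Nonempty ∧ Disjoint K₁ K₂ ∧ K₁ ∪ K₂ = pencil k σ S ∧
    B₀ = pencilPoints σ K₁ ∧ Bₙ = pencilHyperplanes S K₂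

variable [Finite F] [Finite V]

theorem ncard_pencil (hσ : finrank F σ = k) (hS : finrank F S = k + 2) (hσS : σ ≤ S) :
    (pencil k σ S).ncard = Nat.card F + 1 := by
  have hcount := ncard_covers_not_le (d := 0) (c := 2) le_rfl hσS rfl (by rw [hσ, hS])
  have hpencil : {G | σ ≤ G ∧ G ≤ S ∧ finrank F G = finrank F σ + 1 ∧ ¬ G ≤ σ} = pencil k σ S := by
    ext G
    refine ⟨fun h ↦ ⟨hσ ▸ h.2.2.1, h.1, h.2.1⟩, fun h ↦ ⟨h.2.1, h.2.2, hσ ▸ h.1, fun hle ↦ ?_⟩⟩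
    have := finrank_mono hle
    have := h.1
    omega
  rw [← hpencil, hcount]
  simp [Finset.sum_range_succ, add_comm]

theorem ncard_pencilPoints (hσ : finrank F σ = k) (hK : K ⊆ pencil k σ S) :
    (pencilPoints σ K).ncard = K.ncard * Nat.card F ^ k := by
  have hsup : ∀ κ ∈ K, ∀ p ≤ κ, ¬ p ≤ σ → σ ⊔ p = κ := fun κ hκ p hpκ hpσ ↦
    sup_eq_of_finrank_eq_add_one (hK hκ).2.1 hpκ (by rw [(hK hκ).1, hσ]) hpσ
  refine ncard_eq_ncard_mul_of_fiber (f := (σ ⊔ ·)) (Set.toFinite _) (Set.toFinite _) ?_ ?_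
  · rintro p ⟨-, κ, hκ, hpκ, hpσ⟩
    exact Set.mem_of_eq_of_mem (hsup κ hκ p hpκ hpσ) hκ
  · intro κ hκ
    have hcount := ncard_covers_not_le (U := ⊥) (d := k) (c := 1) bot_le (hK hκ).2.1
      (by rw [finrank_bot, hσ, zero_add]) (by rw [(hK hκ).1, hσ])
    simp only [Finset.range_one, Finset.sum_singleton, pow_zero, mul_one] at hcount
    rw [← hcount]
    congr 1
    ext p
    constructor
    · rintro ⟨⟨hp, -, -, -, hpσ⟩, rfl⟩
      exact ⟨bot_le, le_sup_right, by rw [hp, finrank_bot], hpσ⟩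
    · rintro ⟨-, hpκ, hp, hpσ⟩
      exact ⟨⟨by rw [hp, finrank_bot], κ, hκ, hpκ, hpσ⟩, hsup κ hκ p hpκ hpσ⟩

theorem ncard_pencilHyperplanes (hS : finrank F S = k + 2) (hV : finrank F V = k + 2 + d)
    (hK : K ⊆ pencil k σ S) :
    (pencilHyperplanes S K).ncard = K.ncard * Nat.card F ^ d := by
  have hinf : ∀ κ ∈ K, ∀ H, κ ≤ H → ¬ S ≤ H → H ⊓ S = κ := fun κ hκ H hκH hSH ↦
    inf_eq_of_finrank_add_one_eq hκH (hK hκ).2.2 (by rw [(hK hκ).1, hS]) hSH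
  refine ncard_eq_ncard_mul_of_fiber (f := (· ⊓ S)) (Set.toFinite _) (Set.toFinite _) ?_ ?_
  · rintro H ⟨-, κ, hκ, hκH, hSH⟩
    exact Set.mem_of_eq_of_mem (hinf κ hκ H hκH hSH) hκ
  · intro κ hκ
    have hcount := ncard_maximal_not_ge (M := ⊤) (c := 1) (d := d) (hK hκ).2.2 le_top
      (by rw [hS, (hK hκ).1]) (by rw [finrank_top, hV, hS])
    simp only [Finset.range_one, Finset.sum_singleton, pow_zero, mul_one] at hcount
    rw [← hcount]
    congr 1
    ext H
    constructor
    · rintro ⟨⟨hH, -, -, -, hSH⟩, rfl⟩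
      exact ⟨inf_le_left, le_top, by rw [hH, finrank_top], hSH⟩
    · rintro ⟨hκH, -, hH, hSH⟩
      exact ⟨⟨by rw [hH, finrank_top], κ, hκ, hκH, hSH⟩, hinf κ hκ H hκH hSH⟩

theorem ncard_pencilPoints_add_ncard_pencilHyperplanes {K₁ K₂ : Set (Submodule F V)}
    (hV : finrank F V = 2 * k + 2) (hS : finrank F S = k + 2) (hσ : finrank F σ = k)
    (hσS : σ ≤ S) (hdisj : Disjoint K₁ K₂) (hunion : K₁ ∪ K₂ = pencil k σ S) :
    (pencilPoints σ K₁).ncard + (pencilHyperplanes S K₂).ncard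
      = (Nat.card F + 1) * Nat.card F ^ k := by
  rw [ncard_pencilPoints hσ (hunion ▸ Set.subset_union_left),
    ncard_pencilHyperplanes (d := k) hS (by omega) (hunion ▸ Set.subset_union_right), ← add_mul,
    ← Set.ncard_union_eq hdisj, hunion, ncard_pencil hσ hS hσS]

theorem IsPencilBlockingSet.ncard_add_ncard (hB : IsPencilBlockingSet k B₀ Bₙ)
    (hV : finrank F V = 2 * k + 2) :
    B₀.ncard + Bₙ.ncard = (Nat.card F + 1) * Nat.card F ^ k := by
  obtain ⟨S, σ, K₁, K₂, hS, hσ, hσS, -, -, hdisj, hunion, rfl, rfl⟩ := hB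
  exact ncard_pencilPoints_add_ncard_pencilHyperplanes hV hS hσ hσS.le hdisj hunion

theorem IsTight.exists_le_and_not_le (hB : IsTight k B₀ Bₙ) :
    ∃ S σ : Submodule F V, finrank F S = k + 2 ∧ finrank F σ = k ∧ σ ≤ S ∧
      (∀ p ∈ B₀, p ≤ S ∧ ¬ p ≤ σ) ∧ ∀ H ∈ Bₙ, σ ≤ H ∧ ¬ S ≤ H := by
  obtain ⟨S, hS, hB₀S, hBₙS⟩ := hB.exists_finrank_eq_add_two
  obtain ⟨σ, hσ, hσBₙ⟩ := hB.exists_finrank_eq_le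
  obtain ⟨x, hx⟩ := hB.points_nonempty
  obtain ⟨H₀, hH₀⟩ := hB.hyperplanes_nonempty
  exact ⟨S, σ, hS, hσ, (le_sInf hσBₙ).trans hBₙS,
    fun p hp ↦ ⟨hB₀S p hp, fun h ↦ hB.not_le hp hH₀ (h.trans (hσBₙ H₀ hH₀))⟩,
    fun H hH ↦ ⟨hσBₙ H hH, fun h ↦ hB.not_le hx hH ((hB₀S x hx).trans h)⟩⟩

theorem IsTight.isPencilBlockingSet (hB : IsTight k B₀ Bₙ) : IsPencilBlockingSet k B₀ Bₙ := by
  obtain ⟨S, σ, hS, hσ, hσS, hpoint, hhyp⟩ := hB.exists_le_and_not_le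
  have htrace : (· ⊓ S) '' Bₙ ⊆ pencil k σ S := by
    rintro _ ⟨H, hH, rfl⟩
    have hdim := finrank_inf_add_one (hB.finrank_hyperplane H hH) (hhyp H hH).2
    exact ⟨Nat.add_right_cancel (hdim.trans hS), le_inf (hhyp H hH).1 hσS, inf_le_right⟩
  have hB₀ : B₀ ⊆ pencilPoints σ (pencil k σ S \ (· ⊓ S) '' Bₙ) := by
    intro p hp
    obtain ⟨hpS, hpσ⟩ := hpoint p hp
    have hp1 := hB.finrank_point p hp
    refine ⟨hp1, σ ⊔ p, ⟨⟨?_, le_sup_left, sup_le hσS hpS⟩, ?_⟩, le_sup_right, hpσ⟩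
    · rw [finrank_sup_eq_add_one hp1 hpσ, hσ]
    · rintro ⟨H, hH, heq⟩
      exact hB.not_le hp hH ((le_sup_right.trans heq.ge).trans inf_le_left)
  have hBₙ : Bₙ ⊆ pencilHyperplanes S ((· ⊓ S) '' Bₙ) := fun H hH ↦ ⟨hB.finrank_hyperplane H hH,
    H ⊓ S, Set.mem_image_of_mem _ hH, inf_le_left, (hhyp H hH).2⟩
  have hunion := Set.sdiff_union_of_subset htrace
  have hcount := ncard_pencilPoints_add_ncard_pencilHyperplanes hB.finrank_eq hS hσ hσS
    Set.disjoint_sdiff_left hunion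
  rw [← hB.ncard_add_ncard] at hcount
  have hle₀ := Set.ncard_le_ncard hB₀
  have hleₙ := Set.ncard_le_ncard hBₙ
  obtain ⟨-, κ, hκ, -⟩ := hB₀ hB.points_nonempty.some_mem
  exact ⟨S, σ, _, _, hS, hσ, lt_of_le_of_finrank_lt_finrank hσS (by omega), ⟨κ, hκ⟩,
    hB.hyperplanes_nonempty.image _, Set.disjoint_sdiff_left, hunion,
    Set.eq_of_subset_of_ncard_le hB₀ (by omega), Set.eq_of_subset_of_ncard_le hBₙ (by omega)⟩

end Construction

theorem stmt_5_general [Finite F] {k : ℕ} (hk : 1 ≤ k) (hV : finrank F V = 2 * k + 2)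
    {B₀ Bₙ : Set (Submodule F V)} (hB : IsBlockingSet k B₀ Bₙ) :
    (Nat.card F + 1) * Nat.card F ^ k ≤ B₀.ncard + Bₙ.ncard ∧
      (B₀.ncard + Bₙ.ncard = (Nat.card F + 1) * Nat.card F ^ k ↔ IsPencilBlockingSet k B₀ Bₙ) := by
  have : FiniteDimensional F V := .of_finrank_pos (by omega)
  have : Finite V := Module.finite_of_finite F
  exact ⟨hB.le_ncard_add_ncard hk hV,
    fun hcard ↦ IsTight.isPencilBlockingSet ⟨hB, hk, hV, hcard⟩, fun h ↦ h.ncard_add_ncard hV⟩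

end VectorSpace

/-- Let `B = B0 ∪ Bn` be a blocking set of points and hyperplanes
with respect to `k`-spaces in `PG(2k+1,q)`.  Then `|B| ≥ (q+1)·q^k`, with equality
iff `B` arises from Construction 1: there are a `(k+1)`-space `SIG`, a `(k-1)`-space
`sig ⊂ SIG` and nonempty sets `K1, K2` partitioning the `k`-spaces between `sig` and
`SIG` such that `B0` is the set of points in some `κ ∈ K1` but not in `sig`, and `Bn`
is the set of hyperplanes through some `κ ∈ K2` not containing `SIG`. -/
theorem stmt_5 {F : Type} [Field F] [Fintype F] (k : ℕ) (hk : 1 ≤ k)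
    (B0 Bn : Set (Submodule F (Fin (2 * k + 2) → F)))
    (hB0 : ∀ p ∈ B0, Module.finrank F p = 1)
    (hBn : ∀ H ∈ Bn, Module.finrank F H = 2 * k + 1)
    (hblock : ∀ W : Submodule F (Fin (2 * k + 2) → F), Module.finrank F W = k + 1 →
      (∃ p ∈ B0, p ≤ W) ∨ (∃ H ∈ Bn, W ≤ H)) :
    (Fintype.card F + 1) * (Fintype.card F) ^ k ≤ B0.ncard + Bn.ncard ∧
    (B0.ncard + Bn.ncard = (Fintype.card F + 1) * (Fintype.card F) ^ k ↔
      ∃ (SIG sig : Submodule F (Fin (2 * k + 2) → F)) (K1 K2 : Set (Submodule F (Fin (2 * k + 2) → F))),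
        Module.finrank F SIG = k + 2 ∧
        Module.finrank F sig = k ∧
        sig < SIG ∧
        K1.Nonempty ∧ K2.Nonempty ∧ Disjoint K1 K2 ∧
        K1 ∪ K2 = {κ : Submodule F (Fin (2 * k + 2) → F) | Module.finrank F κ = k + 1 ∧ sig ≤ κ ∧ κ ≤ SIG} ∧
        B0 = {p : Submodule F (Fin (2 * k + 2) → F) | Module.finrank F p = 1 ∧ ∃ κ ∈ K1, p ≤ κ ∧ ¬ p ≤ sig} ∧
        Bn = {H : Submodule F (Fin (2 * k + 2) → F) | Module.finrank F H = 2 * k + 1 ∧ ∃ κ ∈ K2, κ ≤ H ∧ ¬ SIG ≤ H}) := by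
  have hV : finrank F (Fin (2 * k + 2) → F) = 2 * k + 2 := finrank_fin_fun F
  simpa [IsPencilBlockingSet, pencil, pencilPoints, pencilHyperplanes, hV] using
    stmt_5_general hk hV ⟨hB0, by simpa [hV] using hBn, hblock⟩
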